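/- Let S_0 ∈ (0,∞) and let S_1 be an integrable random variable whose law Q := Law(S_1) has no atoms and has support equal to ℝ_+. Let u = u_λ be the Tail V@R utility of order λ ∈ (0,1], assume u(S_1) < S_0 < −u(−S_1), and let F = f(S_1) where f : ℝ_+ → ℝ is convex of linear growth. Choose a, b, c, d with a + b = λ, d − c = λ, λ^{-1}(∫_0^{q_a} x Q(dx) + ∫_{q_{1−b}}^∞ x Q(dx)) = S_0 and λ^{-1}∫_{q_c}^{q_d} x Q(dx) = S_0, where q_x denotes the x-quantile of Q. Then, in the static model with attainable set A = {h(S_1 − S_0) : h ∈ ℝ}: V̄(F) = λ^{-1}(∫_0^{q_a} f(x) Q(dx) + ∫_{q_{1−b}}^∞ f(x) Q(dx)), V̲(F) = λ^{-1}∫_{q_c}^{q_d} f(x) Q(dx), the superhedging strategy is H̄(F) = (f(q_{1−b}) − f(q_a))/(q_{1−b} − q_a), and the subhedging strategy is H̲(F) = −(f(q_d) − f(q_c))/(q_d − q_c). -/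

import Mathlib

open MeasureTheory Filter Set
open scoped ENNReal

variable {Ω : Type*} [MeasurableSpace Ω]

/-- Densities of probability measures absolutely continuous w.r.t. `P`. -/
def Dens (P : Measure Ω) : Set (Ω → ℝ) :=
  {Z | Measurable Z ∧ (∀ ω, 0 ≤ Z ω) ∧ ∫⁻ ω, ENNReal.ofReal (Z ω) ∂P = 1}

/-- `E_Q[X] = E_Q[X⁺] − E_Q[X⁻]` with the convention `∞ − ∞ = −∞`, where `dQ/dP = Z`. -/
noncomputable def eexp (P : Measure Ω) (Z X : Ω → ℝ) : EReal :=
  if (∫⁻ ω, ENNReal.ofReal (-(Z ω * X ω)) ∂P) = ⊤ then ⊥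
  else ((∫⁻ ω, ENNReal.ofReal (Z ω * X ω) ∂P : ℝ≥0∞) : EReal)
    - ((∫⁻ ω, ENNReal.ofReal (-(Z ω * X ω)) ∂P : ℝ≥0∞) : EReal)

/-- Coherent utility function determined by a set of densities `D`. -/
noncomputable def cohU (P : Measure Ω) (D : Set (Ω → ℝ)) (X : Ω → ℝ) : EReal :=
  ⨅ Z ∈ D, eexp P Z X

/-- The weak `L¹`-space associated with `D`. -/
def Lw (P : Measure Ω) (D : Set (Ω → ℝ)) : Set (Ω → ℝ) :=
  {X | Measurable X ∧ ⊥ < cohU P D X ∧ ⊥ < cohU P D (fun ω => -X ω)}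

noncomputable def tailSup (P : Measure Ω) (D : Set (Ω → ℝ)) (X : Ω → ℝ) (n : ℕ) : ℝ≥0∞ :=
  ⨆ Z ∈ D, ∫⁻ ω in {ω | (n : ℝ) < |X ω|}, ENNReal.ofReal (Z ω * |X ω|) ∂P

/-- The strong `L¹`-space associated with `D`. -/
def Ls (P : Measure Ω) (D : Set (Ω → ℝ)) : Set (Ω → ℝ) :=
  {X | Measurable X ∧ Tendsto (tailSup P D X) atTop (nhds 0)}

/-- Risk-neutral densities for the set `A` of attainable P&Ls. -/
def RiskNeutral (P : Measure Ω) (A : Set (Ω → ℝ)) : Set (Ω → ℝ) :=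
  {Z | Z ∈ Dens P ∧ ∀ X ∈ A, eexp P Z X ≤ 0}

/-- `A` is `D`-consistent. -/
def DConsistent (P : Measure Ω) (D A : Set (Ω → ℝ)) : Prop :=
  ∃ A' ⊆ A ∩ Ls P D, D ∩ RiskNeutral P A = D ∩ RiskNeutral P A'

/-- Sequential compactness of `D` in the weak topology `σ(L¹, L^∞)`. -/
def WSeqCompact (P : Measure Ω) (D : Set (Ω → ℝ)) : Prop :=
  ∀ Z : ℕ → Ω → ℝ, (∀ n, Z n ∈ D) → ∃ W ∈ D, ∃ φ : ℕ → ℕ, StrictMono φ ∧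
    ∀ g : Ω → ℝ, Measurable g → (∃ C : ℝ, ∀ ω, |g ω| ≤ C) →
      Tendsto (fun k => ∫ ω, Z (φ k) ω * g ω ∂P) atTop (nhds (∫ ω, W ω * g ω ∂P))

/-- `D` is closed under `L¹`-convergence (within densities). -/
def L1Closed (P : Measure Ω) (D : Set (Ω → ℝ)) : Prop :=
  ∀ Z : ℕ → Ω → ℝ, (∀ n, Z n ∈ D) → ∀ W ∈ Dens P,
    Tendsto (fun n => ∫ ω, |Z n ω - W ω| ∂P) atTop (nhds 0) → W ∈ D


/-- The determining set `D_λ = {Q ∈ 𝒫 : dQ/dP ≤ λ⁻¹}` of Tail V@R of order `λ`. -/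
def TVDens (P : Measure Ω) (l : ℝ) : Set (Ω → ℝ) :=
  {Z | Z ∈ Dens P ∧ ∀ ω, Z ω ≤ l⁻¹}

/-- Tail V@R utility `u_λ(X) = inf_{Q ∈ D_λ} E_Q[X]` as a real number. -/
noncomputable def tvU (P : Measure Ω) (l : ℝ) (X : Ω → ℝ) : ℝ :=
  sInf {r : ℝ | ∃ W ∈ TVDens P l, r = ∫ ω, W ω * X ω ∂P}

lemma TVDens.integrable_mul {P : Measure Ω} {l : ℝ} {Z X : Ω → ℝ}
    (hZ : Z ∈ TVDens P l) (hX : Integrable X P) : Integrable (fun ω => Z ω * X ω) P := by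
  refine hX.bdd_mul (c := l⁻¹) hZ.1.1.aestronglyMeasurable (ae_of_all _ fun ω => ?_)
  rw [Real.norm_eq_abs, abs_of_nonneg (hZ.1.2.1 ω)]
  exact hZ.2 ω

lemma TVDens.integrable {P : Measure Ω} [IsFiniteMeasure P] {l : ℝ} {Z : Ω → ℝ}
    (hZ : Z ∈ TVDens P l) : Integrable Z P := by
  simpa using TVDens.integrable_mul hZ (integrable_const (1 : ℝ))

lemma Dens.integral_eq_one {P : Measure Ω} {Z : Ω → ℝ} (hZ : Z ∈ Dens P) : ∫ ω, Z ω ∂P = 1 := by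
  rw [integral_eq_lintegral_of_nonneg_ae (ae_of_all _ hZ.2.1) hZ.1.aestronglyMeasurable, hZ.2.2]
  simp

lemma mem_TVDens_of_integral {P : Measure Ω} {l : ℝ} {Z : Ω → ℝ} (hm : Measurable Z)
    (h0 : ∀ ω, 0 ≤ Z ω) (h1 : ∀ ω, Z ω ≤ l⁻¹) (hi : Integrable Z P) (hint : ∫ ω, Z ω ∂P = 1) :
    Z ∈ TVDens P l := by
  refine ⟨⟨hm, h0, ?_⟩, h1⟩
  rw [← ofReal_integral_eq_lintegral_ofReal hi (ae_of_all _ h0), hint, ENNReal.ofReal_one]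

lemma eexp_eq_integral {P : Measure Ω} {Z X : Ω → ℝ}
    (h : Integrable (fun ω => Z ω * X ω) P) :
    eexp P Z X = ((∫ ω, Z ω * X ω ∂P : ℝ) : EReal) := by
  have hpos : ∫⁻ ω, ENNReal.ofReal (Z ω * X ω) ∂P ≠ ⊤ := h.lintegral_lt_top.ne
  have hneg : ∫⁻ ω, ENNReal.ofReal (-(Z ω * X ω)) ∂P ≠ ⊤ := h.neg.lintegral_lt_top.ne
  rw [eexp, if_neg hneg, integral_eq_lintegral_pos_part_sub_lintegral_neg_part h,
    EReal.coe_sub, EReal.coe_ennreal_toReal hpos, EReal.coe_ennreal_toReal hneg]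

lemma zero_le_cohU_TVDens_iff {P : Measure Ω} {l : ℝ} {X : Ω → ℝ} (hX : Integrable X P) :
    0 ≤ cohU P (TVDens P l) X ↔ ∀ Z ∈ TVDens P l, 0 ≤ ∫ ω, Z ω * X ω ∂P := by
  rw [cohU, le_iInf₂_iff]
  refine forall₂_congr fun Z hZ => ?_
  rw [eexp_eq_integral (TVDens.integrable_mul hZ hX), EReal.coe_nonneg]

lemma integral_indicator_const_mul {P : Measure Ω} {E : Set Ω} (hE : MeasurableSet E) (r : ℝ)
    (X : Ω → ℝ) : ∫ ω, E.indicator (fun _ => r) ω * X ω ∂P = r * ∫ ω in E, X ω ∂P := by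
  rw [← integral_const_mul, ← integral_indicator hE]
  exact integral_congr_ae (ae_of_all _ fun ω => by by_cases h : ω ∈ E <;> simp [h])

lemma indicator_mem_TVDens {P : Measure Ω} [IsFiniteMeasure P] {l : ℝ} (hl : 0 < l) {E : Set Ω}
    (hE : MeasurableSet E) (hPE : P.real E = l) :
    E.indicator (fun _ => l⁻¹) ∈ TVDens P l := by
  have hl' : 0 ≤ l⁻¹ := (inv_pos.2 hl).le
  refine mem_TVDens_of_integral (measurable_const.indicator hE)
    (fun ω => indicator_nonneg (fun _ _ => hl') ω)
    (fun ω => indicator_le_self' (fun _ _ => hl') ω)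
    ((integrable_const _).indicator hE) ?_
  rw [integral_indicator hE, setIntegral_const, hPE, smul_eq_mul, mul_inv_cancel₀ hl.ne']

/-- The normalised indicator of a sublevel set of `G` minimises the expectation of `G`
over `TVDens`. -/
lemma integral_indicator_le_of_level {P : Measure Ω} [IsFiniteMeasure P] {l : ℝ} (hl : 0 < l)
    {E : Set Ω} (hE : MeasurableSet E) (hPE : P.real E = l) {G : Ω → ℝ} (hG : Integrable G P)
    {m : ℝ} (hlev : ∀ᵐ ω ∂P, (ω ∈ E → G ω ≤ m) ∧ (ω ∉ E → m ≤ G ω))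
    {Z : Ω → ℝ} (hZ : Z ∈ TVDens P l) :
    l⁻¹ * ∫ ω in E, G ω ∂P ≤ ∫ ω, Z ω * G ω ∂P := by
  have hW := indicator_mem_TVDens hl hE hPE
  have iZ := TVDens.integrable_mul hZ hG
  have iW := TVDens.integrable_mul hW hG
  have iZm := (TVDens.integrable hZ).const_mul m
  have iWm := (TVDens.integrable hW).const_mul m
  have key : 0 ≤ ∫ ω, ((Z ω * G ω - E.indicator (fun _ => l⁻¹) ω * G ω)
      - (m * Z ω - m * E.indicator (fun _ => l⁻¹) ω)) ∂P := by
    refine integral_nonneg_of_ae ?_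
    filter_upwards [hlev] with ω hω
    have h0 := hZ.1.2.1 ω
    have h1 := hZ.2 ω
    by_cases h : ω ∈ E
    · have := hω.1 h
      simp only [indicator_of_mem h, Pi.zero_apply]
      nlinarith
    · have := hω.2 h
      simp only [indicator_of_notMem h, Pi.zero_apply]
      nlinarith
  have iZW : Integrable (fun ω => Z ω * G ω - E.indicator (fun _ => l⁻¹) ω * G ω) P := iZ.sub iW
  have iZWm : Integrable (fun ω => m * Z ω - m * E.indicator (fun _ => l⁻¹) ω) P := iZm.sub iWm
  rw [integral_sub iZW iZWm, integral_sub iZ iW, integral_sub iZm iWm,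
    integral_const_mul, integral_const_mul, Dens.integral_eq_one hZ.1, Dens.integral_eq_one hW.1,
    integral_indicator_const_mul hE] at key
  linarith

/-- If `G` is larger on a non-null part of `E` than on a non-null set outside `E`, then the
normalised indicator of `E` does not minimise the expectation of `G` over `TVDens`. -/
lemma exists_integral_lt_of_swap {P : Measure Ω} [IsFiniteMeasure P] {l : ℝ} (hl : 0 < l)
    {E : Set Ω} (hE : MeasurableSet E) (hPE : P.real E = l) {G : Ω → ℝ} (hG : Integrable G P)
    {A B : Set Ω} (hA : MeasurableSet A) (hB : MeasurableSet B) (hAE : A ⊆ E) (hBE : B ⊆ Eᶜ)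
    (hPA : P A ≠ 0) (hPB : P B ≠ 0) {m₁ m₂ : ℝ} (hm : m₁ < m₂)
    (hGB : ∀ ω ∈ B, G ω ≤ m₁) (hGA : ∀ ω ∈ A, m₂ ≤ G ω) :
    ∃ Z ∈ TVDens P l, ∫ ω, Z ω * G ω ∂P < l⁻¹ * ∫ ω in E, G ω ∂P := by
  have hl' : 0 < l⁻¹ := inv_pos.2 hl
  have hA0 : 0 < P.real A := (measureReal_nonneg).lt_of_ne' (by simpa [measureReal_eq_zero_iff])
  have hB0 : 0 < P.real B := (measureReal_nonneg).lt_of_ne' (by simpa [measureReal_eq_zero_iff])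
  obtain ⟨ε, hε, hεA, hεB⟩ : ∃ ε > 0, ε ≤ l⁻¹ * P.real A ∧ ε ≤ l⁻¹ * P.real B :=
    ⟨min (l⁻¹ * P.real A) (l⁻¹ * P.real B), by positivity, min_le_left _ _, min_le_right _ _⟩
  obtain ⟨α, hα0, hα1, hα⟩ : ∃ α, 0 ≤ α ∧ α ≤ l⁻¹ ∧ α * P.real A = ε :=
    ⟨ε / P.real A, by positivity, (div_le_iff₀ hA0).2 hεA, div_mul_cancel₀ _ hA0.ne'⟩
  obtain ⟨β, hβ0, hβ1, hβ⟩ : ∃ β, 0 ≤ β ∧ β ≤ l⁻¹ ∧ β * P.real B = ε :=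
    ⟨ε / P.real B, by positivity, (div_le_iff₀ hB0).2 hεB, div_mul_cancel₀ _ hB0.ne'⟩
  have hint : ∀ X : Ω → ℝ, Integrable X P →
      ∫ ω, (E.indicator (fun _ => l⁻¹) ω + B.indicator (fun _ => β) ω
        - A.indicator (fun _ => α) ω) * X ω ∂P
      = l⁻¹ * ∫ ω in E, X ω ∂P + β * ∫ ω in B, X ω ∂P - α * ∫ ω in A, X ω ∂P := by
    intro X hX
    have hi : ∀ (C : Set Ω) (r : ℝ), MeasurableSet C →
        Integrable (fun ω => C.indicator (fun _ => r) ω * X ω) P := fun C r hC => by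
      refine hX.bdd_mul (c := |r|) (measurable_const.indicator hC).aestronglyMeasurable
        (ae_of_all _ fun ω => ?_)
      by_cases h : ω ∈ C <;> simp [h]
    simp only [sub_mul, add_mul]
    have hEB : Integrable (fun ω => E.indicator (fun _ => l⁻¹) ω * X ω
        + B.indicator (fun _ => β) ω * X ω) P := (hi E _ hE).add (hi B _ hB)
    rw [integral_sub hEB (hi A _ hA),
      integral_add (hi E _ hE) (hi B _ hB)]
    simp only [integral_indicator_const_mul, hE, hA, hB]
  refine ⟨fun ω => E.indicator (fun _ => l⁻¹) ω + B.indicator (fun _ => β) ω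
        - A.indicator (fun _ => α) ω, mem_TVDens_of_integral ?_ ?_ ?_ ?_ ?_, ?_⟩
  · exact ((measurable_const.indicator hE).add (measurable_const.indicator hB)).sub
      (measurable_const.indicator hA)
  · intro ω
    by_cases h : ω ∈ E
    · have hb : ω ∉ B := fun hb => hBE hb h
      by_cases h' : ω ∈ A <;> simp [h, hb, h', hl'.le, hα1]
    · have ha : ω ∉ A := fun ha => h (hAE ha)
      by_cases h' : ω ∈ B <;> simp [h, ha, h', hβ0]
  · intro ω
    by_cases h : ω ∈ E
    · have hb : ω ∉ B := fun hb => hBE hb h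
      by_cases h' : ω ∈ A <;> simp [h, hb, h', hα0]
    · have ha : ω ∉ A := fun ha => h (hAE ha)
      by_cases h' : ω ∈ B <;> simp [h, ha, h', hβ1, hl.le]
  · exact (((integrable_const _).indicator hE).add ((integrable_const _).indicator hB)).sub
      ((integrable_const _).indicator hA)
  · have := hint (fun _ => 1) (integrable_const _)
    simp only [mul_one] at this
    rw [this]
    simp only [setIntegral_const, smul_eq_mul, mul_one, hα, hβ, hPE]
    rw [inv_mul_cancel₀ hl.ne']
    ring
  · rw [hint G hG]
    have h1 : ∫ ω in B, G ω ∂P ≤ ∫ _ in B, m₁ ∂P :=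
      setIntegral_mono_on hG.integrableOn (integrable_const _) hB hGB
    have h2 : ∫ _ in A, m₂ ∂P ≤ ∫ ω in A, G ω ∂P :=
      setIntegral_mono_on (integrable_const _) hG.integrableOn hA hGA
    simp only [setIntegral_const, smul_eq_mul] at h1 h2
    have h3 : β * ∫ ω in B, G ω ∂P ≤ ε * m₁ := by
      rw [← hβ, mul_assoc]; exact mul_le_mul_of_nonneg_left h1 hβ0
    have h4 : ε * m₂ ≤ α * ∫ ω in A, G ω ∂P := by
      rw [← hα, mul_assoc]; exact mul_le_mul_of_nonneg_left h2 hα0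
    have := mul_lt_mul_of_pos_left hm hε
    linarith

/-- Duality between prices and hedges: if `E` is a level set of `h₀ S - F` whose normalised
indicator prices `S` correctly, then it also yields the upper price of `F`, and `h₀` is the
only superhedging strategy as soon as `E` is not a level set for any other `h`. -/
lemma upperPrice_eq_and_hedge_eq {P : Measure Ω} [IsProbabilityMeasure P] {l : ℝ} (hl : 0 < l)
    {E : Set Ω} (hE : MeasurableSet E) (hPE : P.real E = l) {S F : Ω → ℝ}
    (hS : Integrable S P) (hF : Integrable F P) {S0 : ℝ} (hS0 : l⁻¹ * ∫ ω in E, S ω ∂P = S0)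
    {h₀ m : ℝ}
    (hlev : ∀ᵐ ω ∂P, (ω ∈ E → h₀ * S ω - F ω ≤ m) ∧ (ω ∉ E → m ≤ h₀ * S ω - F ω))
    (hswap : ∀ h, h ≠ h₀ → ∃ A B : Set Ω, MeasurableSet A ∧ MeasurableSet B ∧ A ⊆ E ∧ B ⊆ Eᶜ ∧
      P A ≠ 0 ∧ P B ≠ 0 ∧ ∃ m₁ m₂ : ℝ, m₁ < m₂ ∧ (∀ ω ∈ B, h * S ω - F ω ≤ m₁) ∧
        ∀ ω ∈ A, m₂ ≤ h * S ω - F ω) :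
    sInf {x : ℝ | ∃ h : ℝ, 0 ≤ cohU P (TVDens P l) (fun ω => h * (S ω - S0) - F ω + x)}
        = l⁻¹ * ∫ ω in E, F ω ∂P ∧
    {h : ℝ | 0 ≤ cohU P (TVDens P l)
      (fun ω => h * (S ω - S0) - F ω + l⁻¹ * ∫ ω in E, F ω ∂P)} = {h₀} := by
  have hGi : ∀ h : ℝ, Integrable (fun ω => h * S ω - F ω) P := fun h => (hS.const_mul h).sub hF
  have hmin : ∀ h : ℝ, l⁻¹ * ∫ ω in E, (h * S ω - F ω) ∂P
      = h * S0 - l⁻¹ * ∫ ω in E, F ω ∂P := by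
    intro h
    rw [integral_sub (hS.const_mul h).integrableOn hF.integrableOn, integral_const_mul, ← hS0]
    ring
  have hcoh : ∀ h x : ℝ, 0 ≤ cohU P (TVDens P l) (fun ω => h * (S ω - S0) - F ω + x) ↔
      ∀ Z ∈ TVDens P l, h * S0 - x ≤ ∫ ω, Z ω * (h * S ω - F ω) ∂P := by
    intro h x
    have heq : (fun ω => h * (S ω - S0) - F ω + x)
        = fun ω => (h * S ω - F ω) + (x - h * S0) := by ext ω; ring
    have hi : Integrable (fun ω => (h * S ω - F ω) + (x - h * S0)) P :=
      (hGi h).add (integrable_const _)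
    rw [heq, zero_le_cohU_TVDens_iff hi]
    refine forall₂_congr fun Z hZ => ?_
    simp only [mul_add]
    rw [integral_add (TVDens.integrable_mul hZ (hGi h)) ((TVDens.integrable hZ).mul_const _),
      integral_mul_const, Dens.integral_eq_one hZ.1]
    constructor <;> intro <;> linarith
  have hW := indicator_mem_TVDens hl hE hPE
  have hmem : 0 ≤ cohU P (TVDens P l)
      (fun ω => h₀ * (S ω - S0) - F ω + l⁻¹ * ∫ ω in E, F ω ∂P) := by
    rw [hcoh]
    intro Z hZ
    rw [← hmin]
    exact integral_indicator_le_of_level hl hE hPE (hGi h₀) hlev hZ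
  refine ⟨IsLeast.csInf_eq ⟨⟨h₀, hmem⟩, ?_⟩, ?_⟩
  · rintro x ⟨h, hx⟩
    have := (hcoh h x).1 hx _ hW
    rw [integral_indicator_const_mul hE, hmin] at this
    linarith
  · refine Set.eq_singleton_iff_unique_mem.2 ⟨hmem, fun h hh => ?_⟩
    by_contra hne
    obtain ⟨A, B, hA, hB, hAE, hBE, hPA, hPB, m₁, m₂, hm, hGB, hGA⟩ := hswap h hne
    obtain ⟨Z, hZ, hlt⟩ :=
      exists_integral_lt_of_swap hl hE hPE (hGi h) hA hB hAE hBE hPA hPB hm hGB hGA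
    rw [hmin] at hlt
    exact absurd ((hcoh h _).1 hh Z hZ) (not_le.2 hlt)

/-- A lower bound for `tvU` given by a sublevel set. -/
lemma le_tvU_of_level {P : Measure Ω} [IsFiniteMeasure P] {l : ℝ} (hl : 0 < l)
    {E : Set Ω} (hE : MeasurableSet E) (hPE : P.real E = l) {G : Ω → ℝ} (hG : Integrable G P)
    {m : ℝ} (hlev : ∀ᵐ ω ∂P, (ω ∈ E → G ω ≤ m) ∧ (ω ∉ E → m ≤ G ω)) :
    l⁻¹ * ∫ ω in E, G ω ∂P ≤ tvU P l G := by
  refine le_csInf ⟨_, _, indicator_mem_TVDens hl hE hPE, rfl⟩ ?_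
  rintro r ⟨Z, hZ, rfl⟩
  exact integral_indicator_le_of_level hl hE hPE hG hlev hZ

/-- A convex function lies below a chord between its endpoints and above it outside. -/
lemma ConvexOn.sub_chord {s : Set ℝ} {f : ℝ → ℝ} (hf : ConvexOn ℝ s f) {p r : ℝ}
    (hp : p ∈ s) (hr : r ∈ s) (hpr : p < r) {x : ℝ} (hx : x ∈ s) :
    (x ∈ Icc p r → f x - (f r - f p) / (r - p) * x ≤ f p - (f r - f p) / (r - p) * p) ∧
    (x ∉ Ioo p r → f p - (f r - f p) / (r - p) * p ≤ f x - (f r - f p) / (r - p) * x) := by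
  have hd : 0 < r - p := sub_pos.2 hpr
  obtain ⟨k, hk⟩ : ∃ k, k = (f r - f p) / (r - p) := ⟨_, rfl⟩
  rw [← hk]
  have hk' : f r = f p + k * (r - p) := by rw [hk]; field_simp; ring
  constructor
  · rintro ⟨h1, h2⟩
    rcases h1.eq_or_lt with rfl | h1
    · exact le_rfl
    rcases h2.eq_or_lt with rfl | h2
    · linarith
    have := hf.slope_mono_adjacent hp hr h1 h2
    rw [div_le_div_iff₀ (by linarith) (by linarith)] at this
    nlinarith
  · intro h
    rcases le_or_gt x p with h1 | h1
    · rcases h1.eq_or_lt with rfl | h1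
      · exact le_rfl
      have := hf.slope_mono_adjacent hx hr h1 hpr
      rw [← hk, div_le_iff₀ (by linarith)] at this
      linarith
    · have h2 : r ≤ x := not_lt.1 fun h2 => h ⟨h1, h2⟩
      rcases h2.eq_or_lt with rfl | h2
      · linarith
      have := hf.slope_mono_adjacent hp hx hpr h2
      rw [← hk, le_div_iff₀ (by linarith)] at this
      linarith

/-- A function with different values at `p` and `r` is smaller somewhere inside `(p, r)` than
somewhere outside, on sets charged by any measure charging all intervals. -/
lemma exists_sets_lt_inside_outside {μ : Measure ℝ}
    (hμ : ∀ x y : ℝ, 0 ≤ x → x < y → μ (Ioo x y) ≠ 0) {G : ℝ → ℝ} {p r : ℝ} (hp : 0 < p)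
    (hpr : p < r) (hGp : ContinuousAt G p) (hGr : ContinuousAt G r) (hne : G p ≠ G r) :
    ∃ I O : Set ℝ, MeasurableSet I ∧ MeasurableSet O ∧ I ⊆ Ioo p r ∧ O ⊆ Ioo 0 p ∪ Ioi r ∧
      μ I ≠ 0 ∧ μ O ≠ 0 ∧ ∃ m₁ m₂ : ℝ, m₁ < m₂ ∧ (∀ x ∈ I, G x ≤ m₁) ∧ ∀ x ∈ O, m₂ ≤ G x := by
  have hnear : ∀ δ > 0, ∃ η > 0, η < p ∧ η < r - p ∧
      (∀ x, |x - p| < η → |G x - G p| < δ) ∧ ∀ x, |x - r| < η → |G x - G r| < δ := by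
    intro δ hδ
    obtain ⟨η₁, h1, h1'⟩ := Metric.continuousAt_iff.1 hGp δ hδ
    obtain ⟨η₂, h2, h2'⟩ := Metric.continuousAt_iff.1 hGr δ hδ
    obtain ⟨η, hη, hlt⟩ := exists_between (lt_min (lt_min h1 h2) (lt_min hp (sub_pos.2 hpr)))
    simp only [lt_min_iff] at hlt
    exact ⟨η, hη, hlt.2.1, hlt.2.2, fun x hx => h1' (hx.trans hlt.1.1),
      fun x hx => h2' (hx.trans hlt.1.2)⟩
  rcases hne.lt_or_gt with hlt | hlt
  · obtain ⟨η, hη, hηp, hηr, h1, h2⟩ := hnear ((G r - G p) / 3) (by linarith)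
    refine ⟨Ioo p (p + η), Ioo r (r + η), measurableSet_Ioo, measurableSet_Ioo,
      fun x hx => ⟨hx.1, by linarith [hx.2]⟩, fun x hx => Or.inr hx.1,
      hμ _ _ hp.le (by linarith), hμ _ _ (by linarith) (by linarith),
      G p + (G r - G p) / 3, G r - (G r - G p) / 3, by linarith, fun x hx => ?_, fun x hx => ?_⟩
    · have := (abs_lt.1 (h1 x (abs_lt.2 ⟨by linarith [hx.1], by linarith [hx.2]⟩))).2
      linarith
    · have := (abs_lt.1 (h2 x (abs_lt.2 ⟨by linarith [hx.1], by linarith [hx.2]⟩))).1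
      linarith
  · obtain ⟨η, hη, hηp, hηr, h1, h2⟩ := hnear ((G p - G r) / 3) (by linarith)
    refine ⟨Ioo (r - η) r, Ioo (p - η) p, measurableSet_Ioo, measurableSet_Ioo,
      fun x hx => ⟨by linarith [hx.1], hx.2⟩, fun x hx => Or.inl ⟨by linarith [hx.1], hx.2⟩,
      hμ _ _ (by linarith) (by linarith), hμ _ _ (by linarith) (by linarith),
      G r + (G p - G r) / 3, G p - (G p - G r) / 3, by linarith, fun x hx => ?_, fun x hx => ?_⟩
    · have := (abs_lt.1 (h2 x (abs_lt.2 ⟨by linarith [hx.1], by linarith [hx.2]⟩))).2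
      linarith
    · have := (abs_lt.1 (h1 x (abs_lt.2 ⟨by linarith [hx.1], by linarith [hx.2]⟩))).1
      linarith

/-- Static one-asset model, Tail V@R of order `λ ∈ (0,1]`, `S_1` integrable
with atomless law `Q` supported exactly on `ℝ_+`, `u(S_1) < S_0 < −u(−S_1)`, `F = f(S_1)` with
`f` convex of linear growth; `a, b, c, d` chosen with `a + b = λ`, `d − c = λ` and
`λ⁻¹(∫_0^{q_a} x dQ + ∫_{q_{1−b}}^∞ x dQ) = S_0`, `λ⁻¹ ∫_{q_c}^{q_d} x dQ = S_0`.
Then the upper/lower NGD prices and the super- and sub-hedging strategies are given by the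
explicit quantile formulas. -/
theorem stmt_19 (P : Measure Ω) [IsProbabilityMeasure P]
    (S0 : ℝ) (hS0pos : 0 < S0) (S1 : Ω → ℝ) (hS1meas : Measurable S1)
    (hS1int : Integrable S1 P)
    (hatomless : ∀ x : ℝ, P.map S1 {x} = 0)
    (hsupp1 : P.map S1 (Set.Iio 0) = 0)
    (hsupp2 : ∀ x : ℝ, 0 ≤ x → ∀ ε : ℝ, 0 < ε → 0 < P.map S1 (Set.Ioo (x - ε) (x + ε)))
    (lam : ℝ) (hlam : lam ∈ Set.Ioc (0 : ℝ) 1)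
    (hprice : tvU P lam S1 < S0 ∧ S0 < -(tvU P lam (fun ω => -S1 ω)))
    (f : ℝ → ℝ) (hfconv : ConvexOn ℝ (Set.Ici 0) f)
    (hflin : ∃ C : ℝ, ∀ x : ℝ, 0 ≤ x → |f x| ≤ C * (1 + x))
    (a b c d : ℝ) (ha : 0 ≤ a) (hb : 0 ≤ b) (hab : a + b = lam)
    (hc : 0 ≤ c) (hd : d ≤ 1) (hcd : d - c = lam)
    (q : ℝ → ℝ)
    (hqa : 0 ≤ q a ∧ P.map S1 (Set.Iic (q a)) = ENNReal.ofReal a)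
    (hqb : 0 ≤ q (1 - b) ∧ P.map S1 (Set.Iic (q (1 - b))) = ENNReal.ofReal (1 - b))
    (hqc : 0 ≤ q c ∧ P.map S1 (Set.Iic (q c)) = ENNReal.ofReal c)
    (hqd : 0 ≤ q d ∧ P.map S1 (Set.Iic (q d)) = ENNReal.ofReal d)
    (hS0ab : lam⁻¹ * ((∫ x in Set.Icc (0 : ℝ) (q a), x ∂(P.map S1))
        + ∫ x in Set.Ici (q (1 - b)), x ∂(P.map S1)) = S0)
    (hS0cd : lam⁻¹ * (∫ x in Set.Icc (q c) (q d), x ∂(P.map S1)) = S0) :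
    let F : Ω → ℝ := fun ω => f (S1 ω)
    let Vbar : ℝ := sInf {x : ℝ | ∃ h : ℝ,
      0 ≤ cohU P (TVDens P lam) (fun ω => h * (S1 ω - S0) - F ω + x)}
    let Vlow : ℝ := sSup {x : ℝ | ∃ h : ℝ,
      0 ≤ cohU P (TVDens P lam) (fun ω => h * (S1 ω - S0) + F ω - x)}
    Vbar = lam⁻¹ * ((∫ x in Set.Icc (0 : ℝ) (q a), f x ∂(P.map S1))
        + ∫ x in Set.Ici (q (1 - b)), f x ∂(P.map S1)) ∧
    Vlow = lam⁻¹ * (∫ x in Set.Icc (q c) (q d), f x ∂(P.map S1)) ∧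
    {h : ℝ | 0 ≤ cohU P (TVDens P lam) (fun ω => h * (S1 ω - S0) - F ω + Vbar)}
      = {(f (q (1 - b)) - f (q a)) / (q (1 - b) - q a)} ∧
    {h : ℝ | 0 ≤ cohU P (TVDens P lam) (fun ω => h * (S1 ω - S0) + F ω - Vlow)}
      = {-((f (q d) - f (q c)) / (q d - q c))} := by
  intro F Vbar Vlow
  have hl : 0 < lam := hlam.1
  have : IsProbabilityMeasure (P.map S1) := Measure.isProbabilityMeasure_map hS1meas.aemeasurable
  have : NullSingletonClass (P.map S1) := ⟨hatomless⟩
  have hμ : ∀ x y : ℝ, 0 ≤ x → x < y → P.map S1 (Ioo x y) ≠ 0 := by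
    intro x y hx hxy
    have := hsupp2 ((x + y) / 2) (by linarith) ((y - x) / 2) (by linarith)
    rw [show (x + y) / 2 - (y - x) / 2 = x by ring, show (x + y) / 2 + (y - x) / 2 = y by ring]
      at this
    exact this.ne'
  have hIic0 : P.map S1 (Iic 0) = 0 := by
    rw [← measure_congr Iio_ae_eq_Iic]; exact hsupp1
  have hposμ : ∀ᵐ x ∂(P.map S1), 0 < x := by
    rw [ae_iff]; simpa [Iic_def] using hIic0
  have hpos : ∀ᵐ ω ∂P, 0 < S1 ω := ae_of_ae_map hS1meas.aemeasurable hposμ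
  have hfcont : ContinuousOn f (Ioi 0) := by
    have := hfconv.continuousOn_interior
    rwa [interior_Ici] at this
  have hid : Integrable (fun x : ℝ => x) (P.map S1) :=
    (integrable_map_measure aestronglyMeasurable_id hS1meas.aemeasurable).2 hS1int
  have hfint : Integrable f (P.map S1) := by
    obtain ⟨C, hC⟩ := hflin
    refine (((integrable_const 1).add hid).const_mul C).mono' ?_ ?_
    · have hres : (P.map S1).restrict (Ioi 0) = P.map S1 := Measure.restrict_eq_self_of_ae_mem hposμ
      rw [← hres]
      exact hfcont.aestronglyMeasurable measurableSet_Ioi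
    · filter_upwards [hposμ] with x hx using hC x hx.le
  have hFint : Integrable F P := hfint.comp_measurable hS1meas
  have hset : ∀ (g : ℝ → ℝ) (s : Set ℝ), Integrable g (P.map S1) → MeasurableSet s →
      ∫ x in s, g x ∂(P.map S1) = ∫ ω in S1 ⁻¹' s, g (S1 ω) ∂P := fun g s hg hs =>
    setIntegral_map hs hg.aestronglyMeasurable hS1meas.aemeasurable
  have hPreal : ∀ s : Set ℝ, MeasurableSet s → P.real (S1 ⁻¹' s) = (P.map S1).real s :=
    fun s hs => (map_measureReal_apply hS1meas hs).symm
  have hcdf : ∀ {x y : ℝ}, 0 ≤ y → P.map S1 (Iic x) = ENNReal.ofReal y →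
      (P.map S1).real (Iic x) = y := fun hy h => by
    rw [measureReal_def, h, ENNReal.toReal_ofReal hy]
  have hcdf_a := hcdf ha hqa.2
  have hcdf_b := hcdf (by linarith [hlam.2]) hqb.2
  have hcdf_c := hcdf hc hqc.2
  have hcdf_d := hcdf (by linarith) hqd.2
  have hcdf_lt : ∀ {x y : ℝ}, (P.map S1).real (Iic x) < (P.map S1).real (Iic y) → x < y :=
    fun h => not_le.1 fun hle => not_le.2 h (measureReal_mono (Iic_subset_Iic.2 hle))
  have hqcd : q c < q d := hcdf_lt (by linarith)
  have hPcd : P.real (S1 ⁻¹' Icc (q c) (q d)) = lam := by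
    rw [hPreal _ measurableSet_Icc, ← measureReal_congr Ioc_ae_eq_Icc, ← Iic_sdiff_Iic,
      measureReal_sdiff (Iic_subset_Iic.2 hqcd.le) measurableSet_Iic, hcdf_c, hcdf_d, hcd]
  rw [hset _ _ hid measurableSet_Icc] at hS0cd
  have hqc0 : 0 < q c := by
    refine hqc.1.lt_of_ne fun h0 => hprice.1.not_ge ?_
    rw [← hS0cd]
    refine le_tvU_of_level hl (hS1meas measurableSet_Icc) hPcd hS1int (m := q d) ?_
    filter_upwards [hpos] with ω hω
    refine ⟨fun h => h.2, fun h => ?_⟩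
    by_contra hlt
    exact h ⟨h0 ▸ hω.le, (not_le.1 hlt).le⟩
  have hlam1 : lam < 1 := by
    have h1 : 0 < (P.map S1).real (Iic (q c)) := by
      refine measureReal_nonneg.lt_of_ne' ?_
      rw [ne_eq, measureReal_eq_zero_iff]
      exact fun h => hμ 0 (q c) le_rfl hqc0 (measure_mono_null (fun x hx => hx.2.le) h)
    linarith
  have hqab : q a < q (1 - b) := hcdf_lt (by linarith)
  have hmeas : MeasurableSet (Icc 0 (q a) ∪ Ici (q (1 - b))) :=
    measurableSet_Icc.union measurableSet_Ici
  have hdisj : Disjoint (Icc 0 (q a)) (Ici (q (1 - b))) :=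
    Set.disjoint_left.2 fun x hx hx' => (hx.2.trans_lt hqab).not_ge hx'
  have hPab : P.real (S1 ⁻¹' (Icc 0 (q a) ∪ Ici (q (1 - b)))) = lam := by
    have h1 : (P.map S1).real (Icc 0 (q a)) = a := by
      refine (measureReal_congr ?_).trans hcdf_a
      filter_upwards [hposμ] with x hx
      exact propext ⟨fun h => h.2, fun h => ⟨hx.le, h⟩⟩
    have h2 : (P.map S1).real (Ici (q (1 - b))) = b := by
      rw [← measureReal_congr Ioi_ae_eq_Ici, ← compl_Iic,
        probReal_compl_eq_one_sub measurableSet_Iic, hcdf_b]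
      ring
    rw [hPreal _ hmeas, measureReal_union hdisj measurableSet_Ici, h1, h2, hab]
  have hunion : ∀ g : ℝ → ℝ, Integrable g (P.map S1) →
      ∫ x in Icc 0 (q a), g x ∂(P.map S1) + ∫ x in Ici (q (1 - b)), g x ∂(P.map S1)
        = ∫ ω in S1 ⁻¹' (Icc 0 (q a) ∪ Ici (q (1 - b))), g (S1 ω) ∂P := fun g hg => by
    rw [← hset g _ hg hmeas, setIntegral_union hdisj measurableSet_Ici hg.integrableOn
      hg.integrableOn]
  rw [hunion _ hid] at hS0ab
  have hqa0 : 0 < q a := by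
    refine hqa.1.lt_of_ne fun h0 => hprice.2.not_ge (neg_le.1 ?_)
    have hS0neg : lam⁻¹ * ∫ ω in S1 ⁻¹' (Icc 0 (q a) ∪ Ici (q (1 - b))), -S1 ω ∂P = -S0 := by
      rw [integral_neg, ← hS0ab]; ring
    rw [← hS0neg]
    refine le_tvU_of_level hl (hS1meas hmeas) hPab hS1int.neg (m := -q (1 - b)) ?_
    filter_upwards [hpos] with ω hω
    refine ⟨fun h => neg_le_neg ?_, fun h => neg_le_neg ?_⟩
    · rcases h with h | h
      · exact absurd (h0 ▸ h.2) (not_le.2 hω)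
      · exact h
    · exact (not_le.1 fun h' => h (Or.inr h')).le
  have hcontAt : ∀ p : ℝ, 0 < p → ContinuousAt f p := fun p hp =>
    hfcont.continuousAt (Ioi_mem_nhds hp)
  have hupper := upperPrice_eq_and_hedge_eq hl (hS1meas hmeas) hPab hS1int hFint hS0ab
    (h₀ := (f (q (1 - b)) - f (q a)) / (q (1 - b) - q a))
    (m := (f (q (1 - b)) - f (q a)) / (q (1 - b) - q a) * q a - f (q a))
    (by
      filter_upwards [hpos] with ω hω
      have hch := hfconv.sub_chord hqa.1 hqb.1 hqab (x := S1 ω) hω.le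
      refine ⟨fun h => ?_, fun h => ?_⟩
      · have := hch.2 fun hI => h.elim (fun h => h.2.not_gt hI.1) fun h => hI.2.not_ge h
        simp only [F]
        linarith
      · have := hch.1 ⟨(not_le.1 fun h' => h (Or.inl ⟨hω.le, h'⟩)).le,
          (not_le.1 fun h' => h (Or.inr h')).le⟩
        simp only [F]
        linarith)
    (by
      intro h hne
      have hne' : h * q a - f (q a) ≠ h * q (1 - b) - f (q (1 - b)) := fun heq =>
        hne ((eq_div_iff (sub_pos.2 hqab).ne').2 (by linarith))
      obtain ⟨I, O, hI, hO, hIs, hOs, hI0, hO0, m₁, m₂, hm, h1, h2⟩ :=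
        exists_sets_lt_inside_outside hμ (G := fun x => h * x - f x) hqa0 hqab
          ((continuousAt_id.const_mul h).sub (hcontAt _ hqa0))
          ((continuousAt_id.const_mul h).sub (hcontAt _ (hqa0.trans hqab))) hne'
      rw [Measure.map_apply hS1meas hI] at hI0
      rw [Measure.map_apply hS1meas hO] at hO0
      refine ⟨S1 ⁻¹' O, S1 ⁻¹' I, hS1meas hO, hS1meas hI, preimage_mono fun x hx => ?_,
        fun ω hω hE => ?_, hO0, hI0, m₁, m₂, hm, fun ω hω => h1 _ hω, fun ω hω => h2 _ hω⟩
      · exact union_subset_union Ioo_subset_Icc_self Ioi_subset_Ici_self (hOs hx)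
      · have := hIs hω
        exact hE.elim (fun h => h.2.not_gt this.1) fun h => this.2.not_ge h)
  have hlower := upperPrice_eq_and_hedge_eq hl (hS1meas measurableSet_Icc) hPcd hS1int hFint.neg
    hS0cd
    (h₀ := -((f (q d) - f (q c)) / (q d - q c)))
    (m := f (q c) - (f (q d) - f (q c)) / (q d - q c) * q c)
    (by
      filter_upwards [hpos] with ω hω
      have hch := hfconv.sub_chord hqc.1 hqd.1 hqcd (x := S1 ω) hω.le
      refine ⟨fun h => ?_, fun h => ?_⟩
      · have := hch.1 h
        simp only [F, Pi.neg_apply]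
        linarith
      · have := hch.2 fun hI => h ⟨hI.1.le, hI.2.le⟩
        simp only [F, Pi.neg_apply]
        linarith)
    (by
      intro h hne
      have hne' : -(h * q c + f (q c)) ≠ -(h * q d + f (q d)) := fun heq =>
        hne (neg_eq_iff_eq_neg.1 ((eq_div_iff (sub_pos.2 hqcd).ne').2 (by linarith)))
      obtain ⟨I, O, hI, hO, hIs, hOs, hI0, hO0, m₁, m₂, hm, h1, h2⟩ :=
        exists_sets_lt_inside_outside hμ (G := fun x => -(h * x + f x)) hqc0 hqcd
          ((continuousAt_id.const_mul h).add (hcontAt _ hqc0)).neg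
          ((continuousAt_id.const_mul h).add (hcontAt _ (hqc0.trans hqcd))).neg hne'
      rw [Measure.map_apply hS1meas hI] at hI0
      rw [Measure.map_apply hS1meas hO] at hO0
      refine ⟨S1 ⁻¹' I, S1 ⁻¹' O, hS1meas hI, hS1meas hO,
        preimage_mono (hIs.trans Ioo_subset_Icc_self), fun ω hω hE => ?_, hI0, hO0, -m₂, -m₁,
        neg_lt_neg hm, fun ω hω => ?_, fun ω hω => ?_⟩
      · exact (hOs hω).elim (fun h => h.2.not_ge hE.1) fun h => hE.2.not_gt h
      · have := h2 _ hω
        simp only [F, Pi.neg_apply]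
        linarith
      · have := h1 _ hω
        simp only [F, Pi.neg_apply]
        linarith)
  have hVbar : Vbar = lam⁻¹ * ∫ ω in S1 ⁻¹' (Icc 0 (q a) ∪ Ici (q (1 - b))), F ω ∂P := hupper.1
  have hsub : ∀ h x : ℝ, (fun ω => h * (S1 ω - S0) + F ω - x)
      = fun ω => h * (S1 ω - S0) - (-F) ω + -x := fun h x => by
    ext ω; simp only [Pi.neg_apply]; ring
  have hnegint : lam⁻¹ * ∫ ω in S1 ⁻¹' Icc (q c) (q d), (-F) ω ∂P
      = -(lam⁻¹ * ∫ ω in S1 ⁻¹' Icc (q c) (q d), F ω ∂P) := by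
    simp only [Pi.neg_apply]
    rw [integral_neg]; ring
  rw [hnegint] at hlower
  have hVlow : Vlow = lam⁻¹ * ∫ ω in S1 ⁻¹' Icc (q c) (q d), F ω ∂P := by
    have h := hlower.1
    rw [Real.sInf_def, neg_inj] at h
    rw [← h]
    simp only [Vlow, hsub]
    rfl
  refine ⟨?_, ?_, ?_, ?_⟩
  · rw [hunion f hfint, hVbar]
  · rw [hset f _ hfint measurableSet_Icc, hVlow]
  · rw [hVbar]; exact hupper.2
  · simp only [hsub]; rw [hVlow]; exact hlower.2
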